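/- For every natural number n ≥ 1 and every partition P of [ω]^n (P may be infinite), there exists a finite partition Q of [ω]^{2n} such that every set X ⊆ ℕ that is homogeneous for Q is a finite union of sets each of which is canonical for P. -/

import Mathlib

/-! Common definitions. -/

/-- The `i`-th smallest element of a finite set of naturals (default 0 if `i ≥ |s|`). -/
def nth (s : Finset ℕ) (i : ℕ) : ℕ := (s.sort (· ≤ ·)).getD i 0

/-- `[ω]^n` : the set of `n`-element subsets of `ℕ` (as `Finset`s). -/
def cube (n : ℕ) : Set (Finset ℕ) := {s | s.card = n}

/-- `P` is a partition of `Z` (one member may be empty). -/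
def IsPartitionOn (Z : Set (Finset ℕ)) (P : Set (Set (Finset ℕ))) : Prop :=
  ⋃₀ P = Z ∧ ∀ A ∈ P, ∀ B ∈ P, A ∩ B = ∅ ∨ A = B

/-- The equivalence relation `≈_P` induced by a partition `P`. -/
def EquivP (P : Set (Set (Finset ℕ))) (p q : Finset ℕ) : Prop := ∃ A ∈ P, p ∈ A ∧ q ∈ A

/-- `X` is `I`-canonical for a partition `P` of `[ω]^n`. -/
def ICanon (n : ℕ) (P : Set (Set (Finset ℕ))) (I : Set ℕ) (X : Set ℕ) : Prop :=
  ∀ p q : Finset ℕ, ↑p ⊆ X → p.card = n → ↑q ⊆ X → q.card = n →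
    (EquivP P p q ↔ ∀ i ∈ I, nth p i = nth q i)

/-- `X` is canonical for a partition `P` of `[ω]^n`. -/
def Canon (n : ℕ) (P : Set (Set (Finset ℕ))) (X : Set ℕ) : Prop :=
  ∃ I : Set ℕ, I ⊆ Set.Iio n ∧ ICanon n P I X

/-- `X` is homogeneous for a partition `P` of `[ω]^n`. -/
def Homog (n : ℕ) (P : Set (Set (Finset ℕ))) (X : Set ℕ) : Prop :=
  ∃ A ∈ P, ∀ s : Finset ℕ, ↑s ⊆ X → s.card = n → s ∈ A

/-- `[2n]^n` : the `n`-element subsets of `{0, …, 2n-1}`. -/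
def idx (n : ℕ) : Finset (Finset ℕ) := Finset.powersetCard n (Finset.range (2 * n))

/-- The set `Q_{pq} = { z ∈ [ω]^{2n} : {z_[i] : i ∈ p} ≈_P {z_[i] : i ∈ q} }`. -/
def Qpq (n : ℕ) (P : Set (Set (Finset ℕ))) (p q : Finset ℕ) : Set (Finset ℕ) :=
  {z | z.card = 2 * n ∧ EquivP P (p.image (nth z)) (q.image (nth z))}

/-- `P*` : the atoms of the field of subsets of `[ω]^{2n}` generated by the sets `Q_{pq}`. -/
def Atoms (n : ℕ) (P : Set (Set (Finset ℕ))) : Set (Set (Finset ℕ)) :=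
  {Q | Q.Nonempty ∧ ∃ S : Finset ℕ → Finset ℕ → Set (Finset ℕ),
    (∀ p ∈ idx n, ∀ q ∈ idx n, S p q = Qpq n P p q ∨ S p q = cube (2 * n) \ Qpq n P p q) ∧
    Q = ⋂ p ∈ idx n, ⋂ q ∈ idx n, S p q}

/-- `I_{pq} = { i < n : p_[i] = q_[i] }`. -/
def Ipq (n : ℕ) (p q : Finset ℕ) : Set ℕ := {i | i < n ∧ nth p i = nth q i}

/-- `I(Q) = ⋂ { I_{pq} : p, q ∈ [2n]^n, Q ⊆ Q_{pq} }`. -/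
def IofQ (n : ℕ) (P : Set (Set (Finset ℕ))) (Q : Set (Finset ℕ)) : Set ℕ :=
  ⋂ p ∈ idx n, ⋂ q ∈ idx n, ⋂ (_ : Q ⊆ Qpq n P p q), Ipq n p q

/-- `ρ(a,b) = |(a △ b) ∩ X|`, identifying `a` with `{0, …, a-1}`. -/
noncomputable def rho (X : Set ℕ) (a b : ℕ) : ℕ := (X ∩ Set.Ico (min a b) (max a b)).ncard

/-- The sparsity `d(x) = min { ρ(a,b) : a, b ∈ x ∪ {e}, a ≠ b }` (with `d(∅) = ⊤ = ω`). -/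
noncomputable def sparsity (X : Set ℕ) (e : ℕ) (x : Finset ℕ) : ℕ∞ :=
  ⨅ a ∈ (x ∪ {e} : Finset ℕ), ⨅ b ∈ (x ∪ {e} : Finset ℕ), ⨅ _ : a ≠ b, (rho X a b : ℕ∞)

/-- `r(x,y) = max_{b ∈ y} min { ρ(a,b) : a ∈ x ∪ {e}, a ≤ b }`. -/
noncomputable def rfun (X : Set ℕ) (e : ℕ) (x y : Finset ℕ) : ℕ :=
  y.sup fun b => sInf ((fun a => rho X a b) '' {a : ℕ | a ∈ (x ∪ {e} : Finset ℕ) ∧ a ≤ b})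

/-- `x →_{pq} y` : there is `z ∈ [X]^{2n}` with `{z_[i] : i ∈ p} = x` and `{z_[i] : i ∈ q} = y`. -/
def Arrow (X : Set ℕ) (n : ℕ) (p q x y : Finset ℕ) : Prop :=
  ∃ z : Finset ℕ, ↑z ⊆ X ∧ z.card = 2 * n ∧ p.image (nth z) = x ∧ q.image (nth z) = y

/-- `x ↔_Q y` : `x →_{pq} y` for some `p, q ∈ [2n]^n` with `Q ⊆ Q_{pq}`. -/
def RelQ (n : ℕ) (P : Set (Set (Finset ℕ))) (Q : Set (Finset ℕ)) (X : Set ℕ)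
    (x y : Finset ℕ) : Prop :=
  ∃ p ∈ idx n, ∃ q ∈ idx n, Q ⊆ Qpq n P p q ∧ Arrow X n p q x y

/-- `x_0, …, x_l` is a `t`-cascade. -/
def IsCascade (n : ℕ) (P : Set (Set (Finset ℕ))) (Q : Set (Finset ℕ)) (X : Set ℕ) (e : ℕ)
    (t l : ℕ) (x : ℕ → Finset ℕ) : Prop :=
  (∀ i ≤ l, ↑(x i) ⊆ X \ {e} ∧ (x i).card = n) ∧
  ∀ i < l, ((n ^ (t - 2 * i) : ℕ) : ℕ∞) ≤ sparsity X e (x i) ∧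
    rfun X e (x i) (x (i + 1)) ≤ n ^ (t - 2 * i - 1) ∧
    RelQ n P Q X (x i) (x (i + 1))

/-- The `n`-fold Fubini power `u ⊗ ⋯ ⊗ u` of an ultrafilter on `ℕ`, as an
ultrafilter on `Fin n → ℕ`. -/
noncomputable def tensorPow (u : Ultrafilter ℕ) : (n : ℕ) → Ultrafilter (Fin n → ℕ)
  | 0 => pure (fun i => i.elim0)
  | n + 1 => u.bind fun a => (tensorPow u n).map (Fin.cons a)

/-- The diagonal ultrafilter extension `f̃(u, u, …, u)` of `f : ℕ^n → ℕ`. -/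
noncomputable def diagExt {n : ℕ} (f : (Fin n → ℕ) → ℕ) (u : Ultrafilter ℕ) : Ultrafilter ℕ :=
  (tensorPow u n).map f

/-- The Rudin–Keisler preorder. -/
def RKle (u v : Ultrafilter ℕ) : Prop := ∃ h : ℕ → ℕ, v.map h = u

/-- Rudin–Keisler equivalence. -/
def RKeq (u v : Ultrafilter ℕ) : Prop := RKle u v ∧ RKle v u

/-- `u` is nonprincipal: it contains no finite set. -/
def Nonprincipal (u : Ultrafilter ℕ) : Prop := ∀ S : Set ℕ, S.Finite → S ∉ u

/-- `u` is a Ramsey ultrafilter. -/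
def IsRamseyU (u : Ultrafilter ℕ) : Prop :=
  Nonprincipal u ∧ ∀ n : ℕ, 1 ≤ n → ∀ P : Set (Set (Finset ℕ)),
    IsPartitionOn (cube n) P → P.Finite → ∃ X ∈ u, Homog n P X

/-- `f : ℕ^n → ℕ` is selectively upward injective on `X` w.r.t. the index set `I`
(`I = ∅` gives "upward constant"). -/
def SelUpInjWrt (n : ℕ) (f : (Fin n → ℕ) → ℕ) (X : Set ℕ) (I : Set (Fin n)) : Prop :=
  ∀ x y : Fin n → ℕ, (∀ i, x i ∈ X) → (∀ i, y i ∈ X) → StrictMono x → StrictMono y →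
    (f x = f y ↔ ∀ i ∈ I, x i = y i)

open Classical in
theorem aux_nth {n : ℕ} (h : Fin n → ℕ) (hh : StrictMono h) (i : Fin n) :
    nth (Finset.univ.image h) i = h i := by
  have hc : (Finset.univ.image h).card = n := by
    rw [Finset.card_image_of_injective _ hh.injective]; simp
  have hu := Finset.orderEmbOfFin_unique hc (f := h) (fun x => by simp) hh
  have h2 : h i = (Finset.univ.image h).orderEmbOfFin hc i := by rw [← hu]
  rw [h2, Finset.orderEmbOfFin_apply]
  unfold nth
  rw [List.getD_eq_getElem]
  rfl

theorem aux_enum {n : ℕ} (e : ℕ → ℕ) (he : StrictMono e) (p : Finset ℕ)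
    (hp : (p : Set ℕ) ⊆ Set.range e) (hc : p.card = n) :
    ∃ a : Fin n → ℕ, StrictMono a ∧ p = Finset.univ.image (e ∘ a) := by
  have h1 : ∀ i : Fin n, ∃ k, e k = p.orderEmbOfFin hc i := fun i =>
    hp (p.orderEmbOfFin_mem hc i)
  choose a ha using h1
  have hea : e ∘ a = p.orderEmbOfFin hc := funext ha
  refine ⟨a, ?_, ?_⟩
  · intro i j hij
    rw [← he.lt_iff_lt, ha, ha]
    exact (p.orderEmbOfFin hc).strictMono hij
  · rw [hea]; simp

theorem aux_type {ι : Type} [Fintype ι] (m : ℕ) (hm : Fintype.card ι = m) (g g' : ι → ℕ)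
    (h : ∀ x y, g x < g y ↔ g' x < g' y) :
    ∃ (s : ι → Fin m) (w w' : Fin m → ℕ), StrictMono w ∧ StrictMono w' ∧
      g = w ∘ s ∧ g' = w' ∘ s := by
  classical
  have hfac : ∀ x y, g x = g y → g' x = g' y := by
    intro x y hxy
    have h1 := h x y
    have h2 := h y x
    omega
  have hF : ∃ f : ℕ → ℕ, ∀ x, f (g x) = g' x := by
    refine ⟨Function.extend g g' 0, fun x => ?_⟩
    exact Function.FactorsThrough.extend_apply (fun a b hab => hfac a b hab) _ _
  obtain ⟨f, hf⟩ := hF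
  obtain ⟨M, hM⟩ : ∃ M, ∀ x, g x ≤ M := 
    ⟨Finset.univ.sup g, fun x => Finset.le_sup (f := g) (Finset.mem_univ x)⟩
  obtain ⟨M', hM'⟩ : ∃ M, ∀ x, g' x ≤ M := 
    ⟨Finset.univ.sup g', fun x => Finset.le_sup (f := g') (Finset.mem_univ x)⟩
  let pr : ℕ → Prop := fun k => (∃ x, g x = k) ∨ M < k
  have hinf : {k | pr k}.Infinite := by
    refine Set.Infinite.mono (s := Set.Ioi M) ?_ (Set.Ioi_infinite M)
    intro k hk
    exact Or.inr hk
  let F : ℕ → ℕ := fun k => if k ≤ M then f k else M' + k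
  have hFm : ∀ k l, pr k → pr l → k < l → F k < F l := by
    rintro k l (⟨x, rfl⟩ | hk) (⟨y, rfl⟩ | hl) hkl
    · simp only [F, hM, if_true, hf]
      exact (h x y).1 hkl
    · simp only [F, hM, if_true, hf]
      rw [if_neg (by omega)]
      have := hM' x
      omega
    · have := hM y
      omega
    · simp only [F]
      rw [if_neg (by omega), if_neg (by omega)]
      omega
  have hcount : ∀ x, Nat.count pr (g x) < m := by
    intro x
    rw [Nat.count_eq_card_filter_range]
    have hsub : (Finset.range (g x)).filter pr ⊆ (Finset.univ.image g).erase (g x) := by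
      intro k hk
      simp only [Finset.mem_filter, Finset.mem_range, pr] at hk
      have := hM x
      rcases hk with ⟨h1, ⟨y, rfl⟩ | h2⟩
      · simp only [Finset.mem_erase, Finset.mem_image, Finset.mem_univ, true_and]
        exact ⟨by omega, y, rfl⟩
      · omega
    have h1 := Finset.card_le_card hsub
    refine lt_of_le_of_lt (le_trans (le_of_eq (by congr)) h1) ?_
    have h2 : ((Finset.univ.image g).erase (g x)).card < (Finset.univ.image g).card :=
      Finset.card_erase_lt_of_mem (by simp)
    have h3 : (Finset.univ.image g).card ≤ m := by
      rw [← hm]; exact Finset.card_image_le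
    omega
  refine ⟨fun x => ⟨Nat.count pr (g x), hcount x⟩, fun i => Nat.nth pr i,
    fun i => F (Nat.nth pr i), ?_, ?_, ?_, ?_⟩
  · intro i j hij
    exact Nat.nth_strictMono hinf hij
  · intro i j hij
    exact hFm _ _ (Nat.nth_mem_of_infinite hinf _) (Nat.nth_mem_of_infinite hinf _)
      (Nat.nth_strictMono hinf hij)
  · funext x
    exact (Nat.nth_count (p := pr) (Or.inl ⟨x, rfl⟩)).symm
  · funext x
    simp only [Function.comp]
    rw [Nat.nth_count (p := pr) (Or.inl ⟨x, rfl⟩)]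
    simp only [F, hM, if_true, hf]

/-- Order-invariant equivalence relations on increasing tuples are canonical. -/
theorem aux_core (n : ℕ) (G : (Fin n → ℕ) → (Fin n → ℕ) → Prop)
    (hr : ∀ a, StrictMono a → G a a)
    (hs : ∀ a b, G a b → G b a)
    (ht : ∀ a b c, G a b → G b c → G a c)
    (hinv : ∀ a b a' b' : Fin n → ℕ, StrictMono a → StrictMono b → StrictMono a' → StrictMono b' →
      (∀ i j, (a i < b j ↔ a' i < b' j) ∧ (b j < a i ↔ b' j < a' i)) → G a b → G a' b') :
    ∃ I : Set (Fin n), ∀ a b, StrictMono a → StrictMono b → (G a b ↔ ∀ i ∈ I, a i = b i) := by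
  let free : Fin n → Prop := fun i => ∃ a v, StrictMono a ∧ StrictMono (Function.update a i v) ∧
    a i < v ∧ G a (Function.update a i v)
  -- order type of a single upward move
  have hty : ∀ (i : Fin n) (a : Fin n → ℕ) (v : ℕ), StrictMono a →
      StrictMono (Function.update a i v) → a i < v → ∀ j k,
      (a j < Function.update a i v k ↔ (j < k ∨ (j = i ∧ k = i))) ∧
      (Function.update a i v k < a j ↔ k < j) := by
    intro i a v ha hu hv j k
    by_cases hk : k = i
    · subst hk
      simp only [Function.update_self]
      rcases lt_trichotomy j k with hj | hj | hj
      · have := ha hj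
        constructor <;> constructor <;> intro h
        · exact Or.inl hj
        · omega
        · omega
        · exact absurd h (by simp [hj.le])
      · subst hj
        simp [hv, hv.le]
      · have h1 := hu hj
        rw [Function.update_self, Function.update_of_ne (by exact hj.ne')] at h1
        constructor <;> constructor <;> intro h
        · omega
        · rcases h with h | h
          · exact absurd h (by simp [hj.le])
          · exact absurd h.1 hj.ne'
        · exact hj
        · exact h1
    · rw [Function.update_of_ne hk]
      simp [ha.lt_iff_lt, hk]
  have hfree : ∀ i, free i → ∀ a v, StrictMono a → StrictMono (Function.update a i v) →
      a i ≤ v → G a (Function.update a i v) := by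
    rintro i ⟨a0, v0, h1, h2, h3, h4⟩ a v ha hu hv
    rcases hv.eq_or_lt with hv | hv
    · subst hv
      rw [Function.update_eq_self]
      exact hr a ha
    · refine hinv a0 _ a _ h1 h2 ha hu ?_ h4
      intro j k
      have e1 := hty i a0 v0 h1 h2 h3 j k
      have e2 := hty i a v ha hu hv j k
      exact ⟨e1.1.trans e2.1.symm, e1.2.trans e2.2.symm⟩
  -- raising free coordinates
  have hup : ∀ a c, StrictMono a → StrictMono c → (∀ i, a i ≤ c i) →
      (∀ i, ¬ free i → a i = c i) → G a c := by
    intro a c ha hc hle hag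
    have key : ∀ k : ℕ, k ≤ n → G a (fun i => if n - k ≤ i.val then c i else a i) := by
      have hsm : ∀ k, StrictMono (fun i : Fin n => if n - k ≤ i.val then c i else a i) := by
        intro k i j hij
        have h1 := ha hij
        have h2 := hc hij
        have h3 := hle j
        have h4 : i.val < j.val := hij
        dsimp only
        split_ifs <;> omega
      intro k
      induction k with
      | zero =>
        intro _
        have : (fun i : Fin n => if n - 0 ≤ i.val then c i else a i) = a := by
          funext i
          rw [if_neg]
          have := i.isLt
          omega
        rw [this]
        exact hr a ha
      | succ k ih =>
        intro hk
        refine ht _ _ _ (ih (by omega)) ?_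
        let i0 : Fin n := ⟨n - (k + 1), by omega⟩
        have heq : (fun i : Fin n => if n - (k + 1) ≤ i.val then c i else a i) =
            Function.update (fun i : Fin n => if n - k ≤ i.val then c i else a i) i0 (c i0) := by
          funext i
          by_cases hi : i = i0
          · subst hi
            simp [i0]
          · rw [Function.update_of_ne hi]
            have : i.val ≠ n - (k + 1) := fun h => hi (Fin.ext h)
            by_cases h5 : n - k ≤ i.val
            · rw [if_pos h5, if_pos (by omega)]
            · rw [if_neg h5, if_neg (by omega)]
        have hv : (fun i : Fin n => if n - k ≤ i.val then c i else a i) i0 = a i0 := by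
          dsimp only
          rw [if_neg]
          simp only [i0]
          omega
        by_cases hfr : free i0
        · have h6 := hsm (k + 1)
          rw [heq] at h6 ⊢
          exact hfree i0 hfr _ _ (hsm k) h6 (hv.le.trans (hle i0))
        · rw [heq, ← hag i0 hfr, ← hv, Function.update_eq_self]
          exact hr _ (hsm k)
    have := key n le_rfl
    simpa using this
  have hback : ∀ a b, StrictMono a → StrictMono b → (∀ i, ¬ free i → a i = b i) → G a b := by
    intro a b ha hb hag
    have hc : StrictMono (fun i => max (a i) (b i)) := by
      intro i j hij
      have h1 := ha hij
      have h2 := hb hij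
      dsimp only
      omega
    refine ht _ (fun i => max (a i) (b i)) _ (hup _ _ ha hc (fun i => le_max_left _ _) ?_)
      (hs _ _ (hup _ _ hb hc (fun i => le_max_right _ _) ?_))
    · intro i hi
      simp [hag i hi]
    · intro i hi
      simp [hag i hi]
  -- top difference is free
  have htop : ∀ a b, StrictMono a → StrictMono b → G a b → ∀ i, (∀ j, i < j → a j = b j) →
      a i < b i → free i := by
    intro a b ha hb hG i hij hlt
    have hne : ∀ j, a j ≠ b i := by
      intro j hj
      rcases lt_trichotomy i j with h | h | h
      · have h1 := hb h
        rw [← hij j h] at h1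
        omega
      · subst h; omega
      · have := ha h
        omega
    have h2a : StrictMono (fun j => 2 * a j) := fun j k h => by
      have := ha h
      dsimp only
      omega
    have h2b : StrictMono (fun j => 2 * b j) := fun j k h => by
      have := hb h
      dsimp only
      omega
    have h2u : StrictMono (Function.update (fun j => 2 * b j) i (2 * b i + 1)) := by
      intro j k h
      have := hb h
      simp only [Function.update_apply]
      split_ifs with h1 h2 h2
      · subst h1; subst h2; omega
      · subst h1; omega
      · subst h2; omega
      · omega
    refine ⟨fun j => 2 * b j, 2 * b i + 1, h2b, h2u, by simp, ?_⟩
    have g1 : G (fun j => 2 * a j) (fun j => 2 * b j) :=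
      hinv _ _ _ _ ha hb h2a h2b (by intro j k; omega) hG
    have g2 : G (fun j => 2 * a j) (Function.update (fun j => 2 * b j) i (2 * b i + 1)) := by
      refine hinv _ _ _ _ ha hb h2a h2u ?_ hG
      intro j k
      have := hne j
      simp only [Function.update_apply]
      split_ifs with h1
      · subst h1; omega
      · omega
    exact ht _ _ _ (hs _ _ g1) g2
  have hfwd : ∀ k : ℕ, ∀ a b, StrictMono a → StrictMono b → G a b →
      (∀ j : Fin n, k ≤ j.val → a j = b j) → ∀ i, ¬ free i → a i = b i := by
    intro k
    induction k with
    | zero => intro a b _ _ _ h i _; exact h i (Nat.zero_le _)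
    | succ k ih =>
      -- one-sided version
      have side : ∀ a b, StrictMono a → StrictMono b → G a b →
          (∀ j : Fin n, k + 1 ≤ j.val → a j = b j) → ∀ hk : k < n, a ⟨k, hk⟩ < b ⟨k, hk⟩ →
          ∀ i, ¬ free i → a i = b i := by
        intro a b ha hb hG hag hk hlt i hi
        have hf : free ⟨k, hk⟩ := htop a b ha hb hG _ (fun j hj => hag j hj) hlt
        have hu : StrictMono (Function.update a ⟨k, hk⟩ (b ⟨k, hk⟩)) := by
          intro j l h
          have h1 := ha h
          have h2 := hb h
          have h0 : j.val < l.val := h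
          simp only [Function.update_apply]
          split_ifs with h3 h4 h4
          · subst h3; subst h4; omega
          · rw [hag l (by rw [h3] at h0; exact h0)]
            subst h3; exact h2
          · subst h4; omega
          · omega
        have hG' : G (Function.update a ⟨k, hk⟩ (b ⟨k, hk⟩)) b :=
          ht _ _ _ (hs _ _ (hfree _ hf a _ ha hu hlt.le)) hG
        have := ih _ b hu hb hG' (by
          intro j hj
          by_cases hjk : j = ⟨k, hk⟩
          · subst hjk; simp
          · rw [Function.update_of_ne hjk]
            have : j.val ≠ k := fun h => hjk (Fin.ext h)
            exact hag j (by omega)) i hi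
        rwa [Function.update_of_ne] at this
        rintro rfl
        exact hi hf
      intro a b ha hb hG hag i hi
      by_cases hk : k < n
      · rcases lt_trichotomy (a ⟨k, hk⟩) (b ⟨k, hk⟩) with h | h | h
        · exact side a b ha hb hG hag hk h i hi
        · refine ih a b ha hb hG ?_ i hi
          intro j hj
          rcases hj.eq_or_lt with h5 | h5
          · have : j = ⟨k, hk⟩ := Fin.ext h5.symm
            rw [this]; exact h
          · exact hag j h5
        · exact (side b a hb ha (hs _ _ hG) (fun j hj => (hag j hj).symm) hk h i hi).symm
      · refine ih a b ha hb hG ?_ i hi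
        intro j hj
        have := j.isLt
        omega
  refine ⟨{i | ¬ free i}, fun a b ha hb => ⟨fun hG i hi => ?_, fun h => hback a b ha hb h⟩⟩
  exact hfwd n a b ha hb hG (fun j hj => absurd j.isLt (by omega)) i hi

/-- The pattern of a `2n`-element set. -/
def auxColor (n : ℕ) (P : Set (Set (Finset ℕ))) (z : Finset ℕ) :
    Set ((Fin n ⊕ Fin n) → Fin (2 * n)) :=
  {s | EquivP P (Finset.univ.image (fun i : Fin n => nth z (s (Sum.inl i))))
    (Finset.univ.image (fun i : Fin n => nth z (s (Sum.inr i))))}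

/-- For every `n ≥ 1` and every partition `P` of `[ω]^n`, there is a finite
partition `Q` of `[ω]^{2n}` such that every `X ⊆ ℕ` homogeneous for `Q` is a finite union
of sets canonical for `P`. -/
theorem stmt_0 (n : ℕ) (hn : 1 ≤ n) (P : Set (Set (Finset ℕ)))
    (hP : IsPartitionOn (cube n) P) :
    ∃ Q : Set (Set (Finset ℕ)), IsPartitionOn (cube (2 * n)) Q ∧ Q.Finite ∧
      ∀ X : Set ℕ, Homog (2 * n) Q X →
        ∃ (k : ℕ) (R : Fin k → Set ℕ), (∀ j, Canon n P (R j)) ∧ X = ⋃ j, R j := by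
  classical
  have Erefl : ∀ p : Finset ℕ, p.card = n → EquivP P p p := by
    intro p hp
    have : p ∈ ⋃₀ P := by rw [hP.1]; exact hp
    obtain ⟨A, hA, hpA⟩ := this
    exact ⟨A, hA, hpA, hpA⟩
  have Esymm : ∀ p q : Finset ℕ, EquivP P p q → EquivP P q p := by
    rintro p q ⟨A, hA, h1, h2⟩
    exact ⟨A, hA, h2, h1⟩
  have Etrans : ∀ p q r : Finset ℕ, EquivP P p q → EquivP P q r → EquivP P p r := by
    rintro p q r ⟨A, hA, h1, h2⟩ ⟨B, hB, h3, h4⟩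
    rcases hP.2 A hA B hB with h | h
    · exact absurd (show q ∈ A ∩ B from ⟨h2, h3⟩) (by rw [h]; simp)
    · subst h
      exact ⟨A, hA, h1, h4⟩
  refine ⟨Set.range (fun T => {z | z ∈ cube (2 * n) ∧ auxColor n P z = T}), ⟨?_, ?_⟩,
    Set.finite_range _, ?_⟩
  · ext z
    simp only [Set.sUnion_range, Set.mem_iUnion, Set.mem_ofPred_eq]
    exact ⟨fun ⟨_, h, _⟩ => h, fun h => ⟨_, h, rfl⟩⟩
  · rintro _ ⟨T, rfl⟩ _ ⟨T', rfl⟩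
    by_cases h : T = T'
    · right; rw [h]
    · left
      ext z
      simp only [Set.mem_inter_iff, Set.mem_ofPred_eq, Set.mem_empty_iff_false, iff_false]
      rintro ⟨⟨_, h1⟩, ⟨_, h2⟩⟩
      exact h (h1.symm.trans h2)
  rintro X ⟨_, ⟨T, rfl⟩, hX⟩
  by_cases hfin : X.Finite
  · -- finite case: singletons
    obtain ⟨k, f, hf⟩ : ∃ (k : ℕ) (f : Fin k → ℕ), Set.range f = X := by
      obtain ⟨k, f, hf⟩ := hfin.fin_param
      exact ⟨k, f, hf.2⟩
    refine ⟨k, fun j => {f j}, fun j => ⟨∅, by simp, ?_⟩, ?_⟩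
    · intro p q hp hpc hq hqc
      have e1 : p = {f j} := by
        rcases Finset.subset_singleton_iff.1 (fun x hx => Finset.mem_singleton.2 (hp hx) : p ⊆ {f j}) with h | h
        · subst h; simp at hpc; omega
        · exact h
      have e2 : q = {f j} := by
        rcases Finset.subset_singleton_iff.1 (fun x hx => Finset.mem_singleton.2 (hq hx) : q ⊆ {f j}) with h | h
        · subst h; simp at hqc; omega
        · exact h
      rw [e2, ← e1]
      simp [Erefl p hpc]
    · rw [← hf]; ext x; simp [eq_comm]
  · have hinf : X.Infinite := hfin
    let e : ℕ → ℕ := Nat.nth (· ∈ X)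
    have he : StrictMono e := Nat.nth_strictMono hinf
    have heX : Set.range e = X := Nat.range_nth_of_infinite hinf
    let G : (Fin n → ℕ) → (Fin n → ℕ) → Prop := fun a b =>
      EquivP P (Finset.univ.image (e ∘ a)) (Finset.univ.image (e ∘ b))
    have hw : ∀ (w : Fin (2 * n) → ℕ), StrictMono w → ∀ s : (Fin n ⊕ Fin n) → Fin (2 * n),
        (s ∈ T ↔ G (fun i => w (s (Sum.inl i))) (fun i => w (s (Sum.inr i)))) := by
      intro w hwm s
      have hew : StrictMono (e ∘ w) := he.comp hwm
      have h1 := hX (Finset.univ.image (e ∘ w)) (by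
          intro x hx
          simp only [Finset.coe_image, Finset.coe_univ, Set.image_univ] at hx
          obtain ⟨i, rfl⟩ := hx
          rw [← heX]; exact ⟨_, rfl⟩) (by
          rw [Finset.card_image_of_injective _ hew.injective]; simp)
      rw [← h1.2]
      simp only [auxColor, Set.mem_ofPred_eq, aux_nth _ hew, G]
      rfl
    have hcore := aux_core n G ?_ ?_ ?_ ?_
    · obtain ⟨I, hI⟩ := hcore
      refine ⟨1, fun _ => X, fun _ => ⟨Fin.val '' I, ?_, ?_⟩, (Set.iUnion_const X).symm⟩
      · rintro _ ⟨i, _, rfl⟩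
        exact i.isLt
      · intro p q hp hpc hq hqc
        obtain ⟨a, ha, rfl⟩ := aux_enum e he p (by rw [heX]; exact hp) hpc
        obtain ⟨b, hb, rfl⟩ := aux_enum e he q (by rw [heX]; exact hq) hqc
        refine (hI a b ha hb).trans ?_
        rw [Set.forall_mem_image]
        refine forall₂_congr fun i _ => ?_
        rw [aux_nth _ (he.comp ha), aux_nth _ (he.comp hb)]
        exact he.injective.eq_iff.symm
    · intro a ha
      refine Erefl _ ?_
      rw [Finset.card_image_of_injective _ (he.comp ha).injective]; simp
    · intro a b h; exact Esymm _ _ h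
    · intro a b c h1 h2; exact Etrans _ _ _ h1 h2
    · intro a b a' b' ha hb ha' hb' h hG
      obtain ⟨s, w, w', h1, h2, h3, h4⟩ := aux_type (2 * n) (by simp; omega) (Sum.elim a b)
        (Sum.elim a' b') (by
          rintro (i | i) (j | j)
          · simp [ha.lt_iff_lt, ha'.lt_iff_lt]
          · exact (h i j).1
          · exact (h j i).2
          · simp [hb.lt_iff_lt, hb'.lt_iff_lt])
      have ea : a = fun i => w (s (Sum.inl i)) := funext fun i => congrFun h3 (Sum.inl i)
      have eb : b = fun i => w (s (Sum.inr i)) := funext fun i => congrFun h3 (Sum.inr i)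
      have ea' : a' = fun i => w' (s (Sum.inl i)) := funext fun i => congrFun h4 (Sum.inl i)
      have eb' : b' = fun i => w' (s (Sum.inr i)) := funext fun i => congrFun h4 (Sum.inr i)
      rw [ea, eb, ← hw w h1] at hG
      rw [ea', eb', ← hw w' h2]
      exact hG
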